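/- arXiv:1701.03773 — 6 statements merged into one kernel-verified Lean document; each statement's English description precedes it below -/
import Mathlib

section
/- If Σ consists entirely of unary predicate symbols, then for a fixed variable x the image of the coalgebraic standard translation ST_x : CML_Λ(Σ) → CPL(Λ,Σ) is precisely the set of CPL(Λ,Σ) formulas that are equality-free, quantifier-free, and use no variable other than x (neither as term nor as comprehension variable). -/
namespace CPL

/-- A Λ-structure: a `Set`-endofunctor `T` together with a natural predicate lifting
for every modal operator. -/
structure LambdaStructure (Λ : Type) (ar : Λ → ℕ) : Type 1 where
  T : Type → Type
  map : {C D : Type} → (C → D) → T C → T D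
  lift : (ℓ : Λ) → (C : Type) → (Fin (ar ℓ) → Set C) → Set (T C)
  natural : ∀ {C D : Type} (f : C → D) (ℓ : Λ) (A : Fin (ar ℓ) → Set D) (t : T C),
      map f t ∈ lift ℓ D A ↔ t ∈ lift ℓ C fun i => f ⁻¹' A i

/-- Formulas of coalgebraic predicate logic `CPL(Λ,Σ)`. -/
inductive Formula (Λ : Type) (ar : Λ → ℕ) (Sig : Type) (arP : Sig → ℕ) (V : Type) : Type
  | eq : V → V → Formula Λ ar Sig arP V
  | pred : (P : Sig) → (Fin (arP P) → V) → Formula Λ ar Sig arP V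
  | bot : Formula Λ ar Sig arP V
  | imp : Formula Λ ar Sig arP V → Formula Λ ar Sig arP V → Formula Λ ar Sig arP V
  | all : V → Formula Λ ar Sig arP V → Formula Λ ar Sig arP V
  | heart : V → (ℓ : Λ) → (Fin (ar ℓ) → V) → (Fin (ar ℓ) → Formula Λ ar Sig arP V) →
      Formula Λ ar Sig arP V

variable {Λ : Type} {ar : Λ → ℕ} {Sig : Type} {arP : Sig → ℕ} {V : Type}

def Formula.notF (φ : Formula Λ ar Sig arP V) : Formula Λ ar Sig arP V := φ.imp .bot

def Formula.orF (φ ψ : Formula Λ ar Sig arP V) : Formula Λ ar Sig arP V := (φ.imp .bot).imp ψ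

def Formula.andF (φ ψ : Formula Λ ar Sig arP V) : Formula Λ ar Sig arP V := (φ.imp ψ.notF).notF

def Formula.iffF (φ ψ : Formula Λ ar Sig arP V) : Formula Λ ar Sig arP V :=
  (φ.imp ψ).andF (ψ.imp φ)

def Formula.exF (x : V) (φ : Formula Λ ar Sig arP V) : Formula Λ ar Sig arP V :=
  (Formula.all x φ.notF).notF

def bigOr (l : List (Formula Λ ar Sig arP V)) : Formula Λ ar Sig arP V :=
  l.foldr Formula.orF .bot

def bigAnd (l : List (Formula Λ ar Sig arP V)) : Formula Λ ar Sig arP V :=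
  l.foldr Formula.andF (Formula.bot.notF)

def allList (ys : List V) (φ : Formula Λ ar Sig arP V) : Formula Λ ar Sig arP V :=
  ys.foldr Formula.all φ

def exList (ys : List V) (φ : Formula Λ ar Sig arP V) : Formula Λ ar Sig arP V :=
  ys.foldr Formula.exF φ

/-- Free variables of a CPL formula. -/
def Formula.freeVars : Formula Λ ar Sig arP V → Set V
  | .eq a b => {a, b}
  | .pred _ xs => Set.range xs
  | .bot => ∅
  | .imp φ ψ => φ.freeVars ∪ ψ.freeVars
  | .all x φ => φ.freeVars \ {x}
  | .heart x _ ys φs => insert x (⋃ i, ((φs i).freeVars \ {ys i}))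

variable [DecidableEq V]

/-- Substitution `φ[t/x]` of the variable `t` for the variable `x` (terms are variables). -/
def Formula.subst : Formula Λ ar Sig arP V → V → V → Formula Λ ar Sig arP V
  | .eq a b, t, x => .eq (if a = x then t else a) (if b = x then t else b)
  | .pred P xs, t, x => .pred P fun i => if xs i = x then t else xs i
  | .bot, _, _ => .bot
  | .imp φ ψ, t, x => .imp (φ.subst t x) (ψ.subst t x)
  | .all y φ, t, x => if y = x then .all y φ else .all y (φ.subst t x)
  | .heart z ℓ ys φs, t, x =>
      .heart (if z = x then t else z) ℓ ys fun i => if ys i = x then φs i else (φs i).subst t x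

/-- Substitutability of the variable `t` for the variable `x` (Enderton-style). -/
def Formula.Substitutable (t x : V) : Formula Λ ar Sig arP V → Prop
  | .eq _ _ => True
  | .pred _ _ => True
  | .bot => True
  | .imp φ ψ => φ.Substitutable t x ∧ ψ.Substitutable t x
  | .all y φ => t ∉ (Formula.all y φ).freeVars ∨ (t ≠ y ∧ φ.Substitutable t x)
  | .heart _ _ ys φs =>
      ∀ i, t ∉ ((φs i).freeVars \ {ys i}) ∨ (t ≠ ys i ∧ (φs i).Substitutable t x)

/-- Satisfaction in a coalgebraic model (given by a coalgebra `γ` and an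
interpretation `I` of the predicate symbols). -/
def Sat (S : LambdaStructure Λ ar) {C : Type} (γ : C → S.T C)
    (I : (P : Sig) → (Fin (arP P) → C) → Prop) :
    (V → C) → Formula Λ ar Sig arP V → Prop
  | v, .eq a b => v a = v b
  | v, .pred P xs => I P fun i => v (xs i)
  | _, .bot => False
  | v, .imp φ ψ => Sat S γ I v φ → Sat S γ I v ψ
  | v, .all x φ => ∀ c : C, Sat S γ I (Function.update v x c) φ
  | v, .heart x ℓ ys φs =>
      γ (v x) ∈ S.lift ℓ C fun i => {c : C | Sat S γ I (Function.update v (ys i) c) (φs i)}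


/-- Boolean (propositional) formulas over a set `α` of atoms. -/
inductive PropForm (α : Type) : Type
  | var : α → PropForm α
  | bot : PropForm α
  | imp : PropForm α → PropForm α → PropForm α

namespace PropForm

def neg {α : Type} (A : PropForm α) : PropForm α := A.imp .bot

def orP {α : Type} (A B : PropForm α) : PropForm α := (A.imp .bot).imp B

def vars {α : Type} : PropForm α → Set α
  | .var a => {a}
  | .bot => ∅
  | .imp A B => A.vars ∪ B.vars

def bind {α β : Type} (f : α → PropForm β) : PropForm α → PropForm β
  | .var a => f a
  | .bot => .bot
  | .imp A B => .imp (A.bind f) (B.bind f)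

end PropForm

/-- Evaluation of Boolean formulas in the Boolean algebra `𝒫 C`. -/
def pEval {α C : Type} (f : α → Set C) : PropForm α → Set C
  | .var a => f a
  | .bot => ∅
  | .imp A B => (pEval f A)ᶜ ∪ pEval f B

/-- Evaluation of Boolean formulas under a valuation of atoms by propositions. -/
def pHolds {α : Type} (w : α → Prop) : PropForm α → Prop
  | .var a => w a
  | .bot => False
  | .imp A B => pHolds w A → pHolds w B

/-- A modal literal `♥ p₁ … pₙ` over schematic variables. -/
abbrev ModalLit (Λ : Type) (ar : Λ → ℕ) (sVar : Type) : Type := (ℓ : Λ) × (Fin (ar ℓ) → sVar)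

/-- A one-step rule `A / P`, with `P` represented as a list of signed modal literals. -/
structure OneStepRule (Λ : Type) (ar : Λ → ℕ) (sVar : Type) : Type where
  prem : PropForm sVar
  lits : List (Bool × ModalLit Λ ar sVar)

variable {Λ : Type} {ar : Λ → ℕ} {sVar : Type}

/-- Well-formedness of one-step rules: every schematic variable occurs at most once in the
conclusion, and every schematic variable of the premise occurs in the conclusion. -/
def OneStepRule.WF (R : OneStepRule Λ ar sVar) : Prop :=
  ((R.lits.map fun l => List.ofFn l.2.2).flatten).Nodup ∧
    R.prem.vars ⊆ {p | ∃ l ∈ R.lits, ∃ j, l.2.2 j = p}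

def litSet (S : LambdaStructure Λ ar) (C : Type) (τ : sVar → Set C)
    (l : Bool × ModalLit Λ ar sVar) : Set (S.T C) :=
  if l.1 then S.lift l.2.1 C (fun j => τ (l.2.2 j)) else (S.lift l.2.1 C (fun j => τ (l.2.2 j)))ᶜ

/-- One-step soundness of a one-step rule. -/
def OneStepSound (S : LambdaStructure Λ ar) (R : OneStepRule Λ ar sVar) : Prop :=
  ∀ (C : Type) (τ : sVar → Set C), pEval τ R.prem = Set.univ →
    (⋃ l ∈ R.lits, litSet S C τ l) = Set.univ

/-- `♥` is `k`-bounded in its `i`-th argument. -/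
def BoundedAt (S : LambdaStructure Λ ar) (ℓ : Λ) (i : Fin (ar ℓ)) (k : ℕ) : Prop :=
  ∀ (C : Type) (A : Fin (ar ℓ) → Set C) (t : S.T C),
    t ∈ S.lift ℓ C A ↔
      ∃ B : Set C, B ⊆ A i ∧ B.Finite ∧ B.ncard ≤ k ∧ t ∈ S.lift ℓ C (Function.update A i B)



section CMLpart

/-- Formulas of coalgebraic modal logic `CML_Λ(Σ)`. -/
inductive CML (Λ : Type) (ar : Λ → ℕ) (Sig : Type) : Type
  | pred : Sig → CML Λ ar Sig
  | bot : CML Λ ar Sig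
  | imp : CML Λ ar Sig → CML Λ ar Sig → CML Λ ar Sig
  | heart : (ℓ : Λ) → (Fin (ar ℓ) → CML Λ ar Sig) → CML Λ ar Sig

/-- Modal satisfaction `𝔐, c ⊨ φ` of a CML formula at a state `c`. -/
def MSat (S : LambdaStructure Λ ar) {C : Type} (γ : C → S.T C)
    (I : (P : Sig) → (Fin 1 → C) → Prop) : C → CML Λ ar Sig → Prop
  | c, .pred P => I P fun _ => c
  | _, .bot => False
  | c, .imp φ ψ => MSat S γ I c φ → MSat S γ I c ψ
  | c, .heart ℓ φs => γ c ∈ S.lift ℓ C fun i => {d : C | MSat S γ I d (φs i)}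

variable [DecidableEq V]

/-- The coalgebraic standard translation `ST_x : CML_Λ(Σ) → CPL(Λ,Σ)`. -/
def ST (x : V) : CML Λ ar Sig → Formula Λ ar Sig (fun _ => 1) V
  | .pred P => .pred P (fun _ => x)
  | .bot => .bot
  | .imp φ ψ => .imp (ST x φ) (ST x ψ)
  | .heart ℓ φs => .heart x ℓ (fun _ => x) (fun i => ST x (φs i))

end CMLpart


section Image

/-- A CPL formula is equality-free. -/
def Formula.EqFree : Formula Λ ar Sig arP V → Prop
  | .eq _ _ => False
  | .pred _ _ => True
  | .bot => True
  | .imp φ ψ => φ.EqFree ∧ ψ.EqFree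
  | .all _ φ => φ.EqFree
  | .heart _ _ _ φs => ∀ i, (φs i).EqFree

/-- A CPL formula is quantifier-free. -/
def Formula.QFree : Formula Λ ar Sig arP V → Prop
  | .eq _ _ => True
  | .pred _ _ => True
  | .bot => True
  | .imp φ ψ => φ.QFree ∧ ψ.QFree
  | .all _ _ => False
  | .heart _ _ _ φs => ∀ i, (φs i).QFree

/-- A CPL formula uses no variable other than `x` (neither as a term, nor as a
comprehension or quantified variable). -/
def Formula.OnlyVar (x : V) : Formula Λ ar Sig arP V → Prop
  | .eq a b => a = x ∧ b = x
  | .pred _ xs => ∀ i, xs i = x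
  | .bot => True
  | .imp φ ψ => φ.OnlyVar x ∧ ψ.OnlyVar x
  | .all y φ => y = x ∧ φ.OnlyVar x
  | .heart z _ ys φs => z = x ∧ (∀ i, ys i = x) ∧ ∀ i, (φs i).OnlyVar x

section StandardTranslation

omit [DecidableEq V]

/-- The modal formula underlying a CPL formula, obtained by forgetting all variables; a candidate
preimage under `ST x`. Equations and universal formulas, which are never translations, are sent to
the junk value `⊥`. -/
def Formula.toCML : Formula Λ ar Sig arP V → CML Λ ar Sig
  | .eq _ _ => .bot
  | .pred P _ => .pred P
  | .bot => .bot
  | .imp φ ψ => .imp φ.toCML ψ.toCML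
  | .all _ _ => .bot
  | .heart _ ℓ _ φs => .heart ℓ fun i => (φs i).toCML

theorem eqFree_ST (x : V) (φ : CML Λ ar Sig) : (ST x φ).EqFree := by
  induction φ with
  | pred | bot => trivial
  | imp _ _ ihφ ihψ => exact ⟨ihφ, ihψ⟩
  | heart _ _ ih => exact ih

theorem qFree_ST (x : V) (φ : CML Λ ar Sig) : (ST x φ).QFree := by
  induction φ with
  | pred | bot => trivial
  | imp _ _ ihφ ihψ => exact ⟨ihφ, ihψ⟩
  | heart _ _ ih => exact ih

theorem onlyVar_ST (x : V) (φ : CML Λ ar Sig) : (ST x φ).OnlyVar x := by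
  induction φ with
  | pred => exact fun _ => rfl
  | bot => trivial
  | imp _ _ ihφ ihψ => exact ⟨ihφ, ihψ⟩
  | heart _ _ ih => exact ⟨rfl, fun _ => rfl, ih⟩

theorem ST_toCML {x : V} {ψ : Formula Λ ar Sig (fun _ => 1) V} (hEq : ψ.EqFree) (hQ : ψ.QFree)
    (hVar : ψ.OnlyVar x) : ST x ψ.toCML = ψ := by
  induction ψ with
  | eq => exact hEq.elim
  | pred P xs => exact congrArg (Formula.pred P) (funext hVar).symm
  | bot => rfl
  | imp φ χ ihφ ihχ =>
    exact congrArg₂ Formula.imp (ihφ hEq.1 hQ.1 hVar.1) (ihχ hEq.2 hQ.2 hVar.2)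
  | all => exact hQ.elim
  | heart z ℓ ys φs ih =>
    obtain ⟨rfl, hys, hφs⟩ := hVar
    obtain rfl : ys = fun _ => z := funext hys
    exact congrArg (Formula.heart z ℓ _) (funext fun i => ih i (hEq i) (hQ i) (hφs i))

end StandardTranslation

/-- **Syntactic characterisation of the modal fragment** (Prop. 3.2): for `Σ` consisting
entirely of unary predicate symbols and a fixed variable `x`, the image of the coalgebraic
standard translation `ST_x` is precisely the set of CPL formulas that are equality-free,
quantifier-free, and use no variable other than `x`. -/
theorem ST_image [DecidableEq V] (x : V) (ψ : Formula Λ ar Sig (fun _ => 1) V) :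
    (∃ φ : CML Λ ar Sig, ST x φ = ψ) ↔ (ψ.EqFree ∧ ψ.QFree ∧ ψ.OnlyVar x) := by
  constructor
  · rintro ⟨φ, rfl⟩
    exact ⟨eqFree_ST x φ, qFree_ST x φ, onlyVar_ST x φ⟩
  · rintro ⟨hEq, hQ, hVar⟩
    exact ⟨ψ.toCML, ST_toCML hEq hQ hVar⟩

end Image

end CPL
end

section
/- The hybrid translation HT is truth-preserving: for every quantifier-free CPL(Λ,Σ) formula φ, every coalgebraic model 𝔐 = (C,γ,I), every assignment v of states to the variables, and every state c ∈ C: 𝔐, v, c ⊨ HT(φ) (in H_Λ(↓,@)) if and only if 𝔐, v ⊨ φ (in CPL). -/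
namespace CPL

variable {Λ : Type} {ar : Λ → ℕ} {Sig : Type} {arP : Sig → ℕ} {V : Type}

variable [DecidableEq V]

variable {Λ : Type} {ar : Λ → ℕ} {sVar : Type}

section Hybrid

/-- Coalgebraic hybrid formulas over world variables `W` (jumbo language containing
`@`, `↓`, the global modality `A` and quantification `∀` over world variables). -/
inductive Hyb (Λ : Type) (ar : Λ → ℕ) (Sig : Type) (W : Type) : Type
  | wvar : W → Hyb Λ ar Sig W
  | pred : Sig → Hyb Λ ar Sig W
  | bot : Hyb Λ ar Sig W
  | imp : Hyb Λ ar Sig W → Hyb Λ ar Sig W → Hyb Λ ar Sig W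
  | heart : (ℓ : Λ) → (Fin (ar ℓ) → Hyb Λ ar Sig W) → Hyb Λ ar Sig W
  | at_ : W → Hyb Λ ar Sig W → Hyb Λ ar Sig W
  | down : W → Hyb Λ ar Sig W → Hyb Λ ar Sig W
  | glob : Hyb Λ ar Sig W → Hyb Λ ar Sig W
  | hall : W → Hyb Λ ar Sig W → Hyb Λ ar Sig W

variable {W : Type}

/-- Hybrid satisfaction `𝔐, g, c ⊨ φ` relative to an assignment `g : W → C` of states to
world variables and a current state `c`. -/
def HSat [DecidableEq W] (S : LambdaStructure Λ ar) {C : Type} (γ : C → S.T C)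
    (I : (P : Sig) → (Fin 1 → C) → Prop) : (W → C) → C → Hyb Λ ar Sig W → Prop
  | g, c, .wvar z => g z = c
  | _, c, .pred P => I P fun _ => c
  | _, _, .bot => False
  | g, c, .imp φ ψ => HSat S γ I g c φ → HSat S γ I g c ψ
  | g, c, .heart ℓ φs => γ c ∈ S.lift ℓ C fun i => {d : C | HSat S γ I g d (φs i)}
  | g, _, .at_ z φ => HSat S γ I g (g z) φ
  | g, c, .down z φ => HSat S γ I (Function.update g z c) c φ
  | g, _, .glob φ => ∀ d : C, HSat S γ I g d φ
  | g, c, .hall z φ => ∀ d : C, HSat S γ I (Function.update g z d) c φ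

/-- Membership in the language `H_Λ(↓,@)`. -/
def Hyb.InDA : Hyb Λ ar Sig W → Prop
  | .wvar _ => True
  | .pred _ => True
  | .bot => True
  | .imp φ ψ => φ.InDA ∧ ψ.InDA
  | .heart _ φs => ∀ i, (φs i).InDA
  | .at_ _ φ => φ.InDA
  | .down _ φ => φ.InDA
  | .glob _ => False
  | .hall _ _ => False

/-- Membership in the language `H_Λ(↓,A)`. -/
def Hyb.InDG : Hyb Λ ar Sig W → Prop
  | .wvar _ => True
  | .pred _ => True
  | .bot => True
  | .imp φ ψ => φ.InDG ∧ ψ.InDG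
  | .heart _ φs => ∀ i, (φs i).InDG
  | .at_ _ _ => False
  | .down _ φ => φ.InDG
  | .glob φ => φ.InDG
  | .hall _ _ => False

/-- Membership in the language `H_Λ(∀,@)`. -/
def Hyb.InFA : Hyb Λ ar Sig W → Prop
  | .wvar _ => True
  | .pred _ => True
  | .bot => True
  | .imp φ ψ => φ.InFA ∧ ψ.InFA
  | .heart _ φs => ∀ i, (φs i).InFA
  | .at_ _ φ => φ.InFA
  | .down _ _ => False
  | .glob _ => False
  | .hall _ φ => φ.InFA

variable [DecidableEq W]

/-- The standard translation `ST_x` of hybrid logic into CPL over the individual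
variables `FoV = W ⊕ ℕ` (world variables are `Sum.inl`-variables; the `Sum.inr`-variables
serve as fresh comprehension variables, with the extra index `n` ensuring that the
comprehension variable `Sum.inr n` chosen at a modal operator is fresh). -/
def STh : ℕ → (W ⊕ ℕ) → Hyb Λ ar Sig W → Formula Λ ar Sig (fun _ => 1) (W ⊕ ℕ)
  | _, x, .wvar z => .eq x (Sum.inl z)
  | _, x, .pred P => .pred P (fun _ => x)
  | _, _, .bot => .bot
  | n, x, .imp φ ψ => .imp (STh n x φ) (STh n x ψ)
  | n, x, .heart ℓ φs =>
      .heart x ℓ (fun _ => Sum.inr n) (fun i => STh (n + 1) (Sum.inr n) (φs i))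
  | n, _, .at_ z φ => STh n (Sum.inl z) φ
  | n, x, .down z φ => (STh n x φ).subst x (Sum.inl z)
  | n, x, .glob φ => .all x (STh n x φ)
  | n, x, .hall z φ => .all (Sum.inl z) (STh n x φ)

end Hybrid

section HybridTranslation

/-- The hybrid translation `HT` of (quantifier-free) CPL into `H_Λ(↓,@)`:
`HT(P(x)) = @_x P`, `HT(x=y) = @_x y`, `HT(⊥) = ⊥`, `HT(φ→ψ) = HT(φ)→HT(ψ)`,
`HT(x♥⌈y₁:φ₁⌉…⌈yₙ:φₙ⌉) = @_x ♥(↓y₁.HT(φ₁),…,↓yₙ.HT(φₙ))`.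
(The value on `∀x.φ`, which is excluded by quantifier-freeness, is irrelevant.) -/
def HT : Formula Λ ar Sig (fun _ => 1) V → Hyb Λ ar Sig V
  | .eq a b => .at_ a (.wvar b)
  | .pred P xs => .at_ (xs 0) (.pred P)
  | .bot => .bot
  | .imp φ ψ => .imp (HT φ) (HT ψ)
  | .all _ _ => .bot
  | .heart x ℓ ys φs => .at_ x (.heart ℓ fun i => .down (ys i) (HT (φs i)))

section Expresses

variable (S : LambdaStructure Λ ar) {C : Type} (γ : C → S.T C)
  (I : (P : Sig) → (Fin 1 → C) → Prop)

/-- The hybrid formula `ψ` expresses the CPL formula `φ` in the model `(C, γ, I)`: under every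
assignment, `ψ` has the truth value of `φ`. As a CPL formula has no current state, `ψ` is required
to have this truth value at every state. Translations are verified compositionally with it. -/
def Hyb.Expresses (ψ : Hyb Λ ar Sig V) (φ : Formula Λ ar Sig (fun _ => 1) V) : Prop :=
  ∀ (v : V → C) (c : C), HSat S γ I v c ψ ↔ Sat S γ I v φ

namespace Hyb

variable {S γ I}

theorem expresses_at_wvar (x y : V) : Expresses S γ I (.at_ x (.wvar y)) (.eq x y) :=
  fun _ _ => eq_comm

theorem expresses_at_pred (P : Sig) (xs : Fin 1 → V) :
    Expresses S γ I (.at_ (xs 0) (.pred P)) (.pred P xs) := by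
  obtain ⟨x, rfl⟩ : ∃ x, xs = fun _ => x := ⟨xs 0, eq_const_of_unique xs⟩
  exact fun _ _ => Iff.rfl

namespace Expresses

theorem imp {ψ₁ ψ₂ : Hyb Λ ar Sig V} {φ₁ φ₂ : Formula Λ ar Sig (fun _ => 1) V}
    (h₁ : ψ₁.Expresses S γ I φ₁) (h₂ : ψ₂.Expresses S γ I φ₂) :
    (ψ₁.imp ψ₂).Expresses S γ I (φ₁.imp φ₂) :=
  fun v c => imp_congr (h₁ v c) (h₂ v c)

/-- `↓y` names the state at which it is evaluated, so the argument `↓y.ψ` of a modality denotes the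
same set of states as the comprehension `⌈y : φ⌉`. -/
theorem setOf_hsat_down {ψ : Hyb Λ ar Sig V} {φ : Formula Λ ar Sig (fun _ => 1) V}
    (h : ψ.Expresses S γ I φ) (v : V → C) (y : V) :
    {d | HSat S γ I v d (.down y ψ)} = {d | Sat S γ I (Function.update v y d) φ} :=
  Set.ext fun d => h (Function.update v y d) d

theorem at_heart_down {ℓ : Λ} {ψs : Fin (ar ℓ) → Hyb Λ ar Sig V}
    {φs : Fin (ar ℓ) → Formula Λ ar Sig (fun _ => 1) V}
    (h : ∀ i, (ψs i).Expresses S γ I (φs i)) (x : V) (ys : Fin (ar ℓ) → V) :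
    Expresses S γ I (.at_ x (.heart ℓ fun i => .down (ys i) (ψs i))) (.heart x ℓ ys φs) := by
  intro v _
  have comprehensions_eq :
      (fun i => {d | HSat S γ I v d (.down (ys i) (ψs i))}) =
        fun i => {d | Sat S γ I (Function.update v (ys i) d) (φs i)} :=
    funext fun i => (h i).setOf_hsat_down v (ys i)
  exact iff_of_eq (congrArg (γ (v x) ∈ S.lift ℓ C ·) comprehensions_eq)

end Expresses

end Hyb

end Expresses

/-- **Truth preservation of the hybrid translation `HT`** (Prop. 4.3): for every
quantifier-free CPL formula `φ`, coalgebraic model `𝔐`, assignment `v` of states to the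
variables, and state `c`:  `𝔐, v, c ⊨ HT(φ)` (in `H_Λ(↓,@)`) iff `𝔐, v ⊨ φ` (in CPL). -/
theorem HT_truth_preserving [DecidableEq V]
    (S : LambdaStructure Λ ar) {C : Type} (γ : C → S.T C)
    (I : (P : Sig) → (Fin 1 → C) → Prop)
    (φ : Formula Λ ar Sig (fun _ => 1) V) (hφ : φ.QFree)
    (v : V → C) (c : C) :
    HSat S γ I v c (HT φ) ↔ Sat S γ I v φ := by
  suffices expresses : (HT φ).Expresses S γ I φ from expresses v c
  induction φ with
  | eq x y => exact Hyb.expresses_at_wvar x y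
  | pred P xs => exact Hyb.expresses_at_pred P xs
  | bot => exact fun _ _ => Iff.rfl
  | imp φ ψ ihφ ihψ => exact (ihφ hφ.1).imp (ihψ hφ.2)
  | all => exact hφ.elim
  | heart x ℓ ys φs ih => exact .at_heart_down (fun i => ih i (hφ i)) x ys

end HybridTranslation

end CPL
end

section
/- Whenever Σ consists purely of unary predicate symbols (and there are no function symbols), the coalgebraic hybrid language H_Λ(↓,@) is expressively equivalent to the quantifier-free fragment of CPL(Λ,Σ): every hybrid formula φ has a quantifier-free CPL formula (namely ST_x(φ)) with the same satisfaction at every model, assignment and state, and every quantifier-free CPL formula ψ has a hybrid formula (namely HT(ψ)) with the same satisfaction, assuming FoV contains WoV plus a disjoint infinite supply of additional comprehension variables. -/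
namespace CPL

variable {Λ : Type} {ar : Λ → ℕ} {Sig : Type} {arP : Sig → ℕ} {V : Type}

variable [DecidableEq V]

variable {Λ : Type} {ar : Λ → ℕ} {sVar : Type}

/-!
In `HT ψ` every atom and every modality is guarded by an `@`, so its truth does not depend on the
current state, and `↓y` stores the successor state in the comprehension variable `y`; the two
satisfaction relations then unfold to the same thing.

For `ST_x`, world variables are evaluated by the restriction of the valuation to `WoV`, and the
current state is the value of `x`. The only clause that does not merely unfold is
`ST_x(↓z.φ) = ST_x(φ)[x/z]`, which needs the substitution lemma. No capture occurs because `ST`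
binds comprehension variables of index at least `n` only, and `x` is not one of these.
-/

/-- The bound variables of a CPL formula. Capture-freeness of `φ.subst t x` is expressed as
`t ∉ φ.boundVars`, since `Formula.Substitutable` does not guarantee it: there the test for a free
occurrence is on `t` rather than on `x`, which makes `y` substitutable for `x` in `∀ y, P(x, y)`. -/
def Formula.boundVars {V : Type} : Formula Λ ar Sig arP V → Set V
  | .eq _ _ => ∅
  | .pred _ _ => ∅
  | .bot => ∅
  | .imp φ ψ => φ.boundVars ∪ ψ.boundVars
  | .all y φ => insert y φ.boundVars
  | .heart _ _ ys φs => ⋃ i, insert (ys i) (φs i).boundVars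

section Substitution

theorem Formula.subst_all (y t x : V) (φ : Formula Λ ar Sig arP V) :
    (Formula.all y φ).subst t x = .all y (if y = x then φ else φ.subst t x) :=
  (apply_ite (Formula.all y) _ _ _).symm

@[simp]
theorem Formula.boundVars_subst (t x : V) (φ : Formula Λ ar Sig arP V) :
    (φ.subst t x).boundVars = φ.boundVars := by
  induction φ with
  | eq | pred | bot => rfl
  | imp φ ψ ihφ ihψ => simp only [subst, boundVars, ihφ, ihψ]
  | all y φ ih => simp only [subst_all, boundVars, apply_ite boundVars, ih, ite_self]
  | heart z ℓ ys φs ih => simp only [subst, boundVars, apply_ite boundVars, ih, ite_self]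

@[simp]
theorem Formula.qFree_subst_iff (t x : V) (φ : Formula Λ ar Sig arP V) :
    (φ.subst t x).QFree ↔ φ.QFree := by
  induction φ with
  | eq | pred | bot => rfl
  | imp φ ψ ihφ ihψ => simp only [subst, QFree, ihφ, ihψ]
  | all y φ => simp only [subst_all, QFree]
  | heart z ℓ ys φs ih => simp only [subst, QFree, apply_ite QFree, ih, ite_self]

variable (S : LambdaStructure Λ ar) {C : Type} (γ : C → S.T C)
  (I : (P : Sig) → (Fin (arP P) → C) → Prop)

theorem sat_subst_under_binder {t x y : V} (hty : t ≠ y) {φ : Formula Λ ar Sig arP V}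
    (hφ : ∀ v, Sat S γ I v (φ.subst t x) ↔ Sat S γ I (Function.update v x (v t)) φ)
    (v : V → C) (c : C) :
    Sat S γ I (Function.update v y c) (if y = x then φ else φ.subst t x) ↔
      Sat S γ I (Function.update (Function.update v x (v t)) y c) φ := by
  split_ifs with hyx
  · rw [hyx, Function.update_idem]
  · rw [hφ, Function.update_of_ne hty, Function.update_comm hyx]

theorem sat_subst_iff {t : V} (x : V) {φ : Formula Λ ar Sig arP V} (ht : t ∉ φ.boundVars)
    (v : V → C) :
    Sat S γ I v (φ.subst t x) ↔ Sat S γ I (Function.update v x (v t)) φ := by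
  have apply_subst_var (v : V → C) (a : V) :
      v (if a = x then t else a) = Function.update v x (v t) a := by
    rw [apply_ite v, Function.update_apply]
  induction φ generalizing v with
  | eq | pred => simp only [Formula.subst, Sat, apply_subst_var]
  | bot => rfl
  | imp φ ψ ihφ ihψ =>
    have ⟨htφ, htψ⟩ := not_or.mp ht
    simp only [Formula.subst, Sat, ihφ htφ, ihψ htψ]
  | all y φ ih =>
    have ⟨hty, htφ⟩ := not_or.mp ht
    simp only [Formula.subst_all, Sat, sat_subst_under_binder S γ I hty (ih htφ)]
  | heart z ℓ ys φs ih =>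
    have argument_iff (i) (c : C) :
        Sat S γ I (Function.update v (ys i) c) (if ys i = x then φs i else (φs i).subst t x) ↔
          Sat S γ I (Function.update (Function.update v x (v t)) (ys i) c) (φs i) := by
      have ⟨hty, htφ⟩ := not_or.mp fun hti => ht (Set.mem_iUnion_of_mem i hti)
      exact sat_subst_under_binder S γ I hty (ih i htφ) v c
    simp only [Formula.subst, Sat, apply_subst_var, argument_iff]

end Substitution

section StandardTranslation

variable {W : Type} [DecidableEq W] {φ : Hyb Λ ar Sig W}

theorem qFree_STh (hφ : φ.InDA) (n : ℕ) (x : W ⊕ ℕ) : (STh n x φ).QFree := by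
  induction φ generalizing n x with
  | wvar | pred | bot => trivial
  | imp φ ψ ihφ ihψ => exact ⟨ihφ hφ.1 n x, ihψ hφ.2 n x⟩
  | heart ℓ φs ih => exact fun i => ih i (hφ i) _ _
  | at_ z φ ih => exact ih hφ n _
  | down z φ ih => exact (Formula.qFree_subst_iff _ _ _).mpr (ih hφ n x)
  | glob | hall => exact hφ.elim

theorem boundVars_STh_subset (hφ : φ.InDA) (n : ℕ) (x : W ⊕ ℕ) :
    (STh n x φ).boundVars ⊆ Sum.inr '' Set.Ici n := by
  induction φ generalizing n x with
  | wvar | pred | bot => exact Set.empty_subset _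
  | imp φ ψ ihφ ihψ => exact Set.union_subset (ihφ hφ.1 n x) (ihψ hφ.2 n x)
  | heart ℓ φs ih =>
    have Ici_succ_subset : Set.Ici (n + 1) ⊆ Set.Ici n := Set.Ici_subset_Ici.mpr n.le_succ
    exact Set.iUnion_subset fun i => Set.insert_subset (Set.mem_image_of_mem _ Set.self_mem_Ici)
      ((ih i (hφ i) (n + 1) _).trans (Set.image_mono Ici_succ_subset))
  | at_ z φ ih => exact ih hφ n _
  | down z φ ih => exact (Formula.boundVars_subst _ _ _).trans_subset (ih hφ n x)
  | glob | hall => exact hφ.elim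

theorem hSat_iff_sat_STh (S : LambdaStructure Λ ar) {C : Type} (γ : C → S.T C)
    (I : (P : Sig) → (Fin 1 → C) → Prop) (hφ : φ.InDA) {n : ℕ} {x : W ⊕ ℕ}
    (hx : x ∉ Sum.inr '' Set.Ici n) (v : W ⊕ ℕ → C) :
    HSat S γ I (v ∘ Sum.inl) (v x) φ ↔ Sat S γ I v (STh n x φ) := by
  induction φ generalizing n x v with
  | wvar z => exact eq_comm
  | pred | bot => rfl
  | imp φ ψ ihφ ihψ => simp only [HSat, STh, Sat, ihφ hφ.1 hx, ihψ hφ.2 hx]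
  | heart ℓ φs ih =>
    have argument_iff (i) (d : C) :
        HSat S γ I (v ∘ Sum.inl) d (φs i) ↔
          Sat S γ I (Function.update v (Sum.inr n) d) (STh (n + 1) (Sum.inr n) (φs i)) := by
      rw [← ih i (hφ i) (by simp), Sum.update_inr_comp_inl, Function.update_self]
    simp only [HSat, STh, Sat, argument_iff]
  | at_ z φ ih => exact ih hφ (by simp) v
  | down z φ ih =>
    have hbound : x ∉ (STh n x φ).boundVars := fun hxb =>
      hx (boundVars_STh_subset (φ := φ) hφ n x hxb)
    have state_eq : Function.update v (Sum.inl z) (v x) x = v x := by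
      simp [Function.update_apply]
    simp only [HSat, STh]
    rw [sat_subst_iff S γ I _ hbound, ← ih hφ hx, Sum.update_inl_comp_inl, state_eq]
  | glob | hall => exact hφ.elim

end StandardTranslation

theorem inDA_HT {V : Type} (ψ : Formula Λ ar Sig (fun _ => 1) V) : (HT ψ).InDA := by
  induction ψ with
  | eq | pred | bot | all => trivial
  | imp φ ψ ihφ ihψ => exact ⟨ihφ, ihψ⟩
  | heart _ _ _ _ ih => exact ih

theorem hSat_HT_iff_sat (S : LambdaStructure Λ ar) {C : Type} (γ : C → S.T C)
    (I : (P : Sig) → (Fin 1 → C) → Prop) {ψ : Formula Λ ar Sig (fun _ => 1) V} (hψ : ψ.QFree)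
    (v : V → C) (c : C) : HSat S γ I v c (HT ψ) ↔ Sat S γ I v ψ := by
  induction ψ generalizing v c with
  | eq => exact eq_comm
  | pred P xs =>
    have args_eq : (fun _ => v (xs 0)) = fun i => v (xs i) :=
      funext fun i => by rw [Subsingleton.elim i 0]
    simp only [HT, HSat, Sat, args_eq]
  | bot => rfl
  | imp φ ψ ihφ ihψ => simp only [HT, HSat, Sat, ihφ hψ.1, ihψ hψ.2]
  | all => exact hψ.elim
  | heart x ℓ ys φs ih =>
    simp only [HT, HSat, Sat, fun i => ih i (hψ i)]

/-- **Expressive equivalence of `H_Λ(↓,@)` and quantifier-free CPL** (Cor. 4.4): for `Σ`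
consisting purely of unary predicate symbols (and no function symbols), and individual
variables `FoV = WoV ⊕ ℕ` (the world variables plus a disjoint infinite supply of
comprehension variables):
* every hybrid formula `φ` of `H_Λ(↓,@)` translates to the quantifier-free CPL formula
  `ST_x(φ)` with the same satisfaction at every model, assignment and state, and
* every quantifier-free CPL formula `ψ` translates to the hybrid formula `HT(ψ)` of
  `H_Λ(↓,@)` with the same satisfaction. -/
theorem hybrid_downat_expressively_equivalent_qf {W : Type} [DecidableEq W]
    (S : LambdaStructure Λ ar) :
    (∀ (φ : Hyb Λ ar Sig W), φ.InDA →
      ∀ (n m : ℕ), m < n →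
        (STh (ar := ar) n (Sum.inr m) φ).QFree ∧
        ∀ {C : Type} (γ : C → S.T C) (I : (P : Sig) → (Fin 1 → C) → Prop)
          (g : W → C) (c : C) (v : W ⊕ ℕ → C), (∀ w : W, v (Sum.inl w) = g w) →
          (HSat S γ I g c φ ↔
            Sat S γ I (Function.update v (Sum.inr m) c) (STh n (Sum.inr m) φ))) ∧
    (∀ ψ : Formula Λ ar Sig (fun _ => 1) (W ⊕ ℕ), ψ.QFree →
      (HT ψ).InDA ∧
      ∀ {C : Type} (γ : C → S.T C) (I : (P : Sig) → (Fin 1 → C) → Prop)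
        (v : W ⊕ ℕ → C) (c : C),
        (HSat S γ I v c (HT ψ) ↔ Sat S γ I v ψ)) := by
  refine ⟨fun φ hφ n m hmn => ⟨qFree_STh hφ n _, fun {C} γ I g c v hv => ?_⟩,
    fun ψ hψ => ⟨inDA_HT ψ, fun γ I v c => hSat_HT_iff_sat S γ I hψ v c⟩⟩
  have hfresh : (Sum.inr m : W ⊕ ℕ) ∉ Sum.inr '' Set.Ici n := by simpa using hmn
  obtain rfl : v ∘ Sum.inl = g := funext hv
  rw [← hSat_iff_sat_STh S γ I hφ hfresh, Sum.update_inr_comp_inl, Function.update_self]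

end CPL
end

section
/- Coalgebraic Łoś Theorem: If the coalgebraic model 𝔐 = (C,γ,V) is a quasi-ultraproduct of the coalgebraic models 𝔐_i = (C_i,γ_i,V_i) for the ultrafilter 𝔘 on I, then for every tuple (a¹,…,aⁿ) of states of C, where a^k = (a^k_i)_{i∈I}, and every CPL formula φ(x₁,…,xₙ): 𝔐 ⊨ φ(a¹,…,aⁿ) if and only if {i ∈ I | 𝔐_i ⊨ φ(a¹_i,…,aⁿ_i)} ∈ 𝔘. -/
namespace CPL

variable {Λ : Type} {ar : Λ → ℕ} {Sig : Type} {arP : Sig → ℕ} {V : Type}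

variable [DecidableEq V]

variable {Λ : Type} {ar : Λ → ℕ} {sVar : Type}

section Ultraproducts

variable {I : Type}

/-- The setoid underlying the ultraproduct `∏_𝔘 X_i`. -/
def upSetoid (𝔘 : Ultrafilter I) (X : I → Type) : Setoid (∀ i, X i) where
  r x y := {i | x i = y i} ∈ 𝔘
  iseqv := by
    refine ⟨fun x => ?_, fun {x y} h => ?_, fun {x y z} hxy hyz => ?_⟩
    · have : {i | x i = x i} = Set.univ := by ext i; simp
      rw [this]; exact Filter.univ_mem
    · have : {i | x i = y i} = {i | y i = x i} := by ext i; exact eq_comm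
      rwa [this] at h
    · exact Filter.mem_of_superset (Filter.inter_mem hxy hyz)
        (fun i hi => hi.1.trans hi.2)

/-- The ultraproduct `∏_𝔘 X_i` of a family of sets. -/
def UProd (𝔘 : Ultrafilter I) (X : I → Type) : Type := Quotient (upSetoid 𝔘 X)

/-- The equivalence class of a family. -/
def upMk (𝔘 : Ultrafilter I) (X : I → Type) (x : ∀ i, X i) : UProd 𝔘 X :=
  Quotient.mk (upSetoid 𝔘 X) x

/-- The admissible subset `∏_𝔘 A_i = {x | {i | x_i ∈ A_i} ∈ 𝔘}` of the ultraproduct. -/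
def admSet (𝔘 : Ultrafilter I) (X : I → Type) (A : ∀ i, Set (X i)) : Set (UProd 𝔘 X) :=
  {c | Quotient.liftOn c (fun x => {i | x i ∈ A i} ∈ 𝔘) (by
    intro x y h
    refine propext ⟨fun hx => ?_, fun hy => ?_⟩
    · refine Filter.mem_of_superset (Filter.inter_mem h hx) (fun i hi => ?_)
      have h1 : x i = y i := hi.1
      have h2 : x i ∈ A i := hi.2
      simpa [h1] using h2
    · refine Filter.mem_of_superset (Filter.inter_mem h hy) (fun i hi => ?_)
      have h1 : x i = y i := hi.1
      have h2 : y i ∈ A i := hi.2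
      simpa [h1] using h2)}

end Ultraproducts

section QuasiUltraproducts

variable {I : Type}

/-- `ξ` is a quasi-ultraproduct of the `T`-coalgebras `(X_i, ξ_i)` w.r.t. `𝔘`
(for a similarity type with unary operators): for every family of subsets `A_i ⊆ X_i`,
every `x ∈ ∏_𝔘 X_i` and every `♥ ∈ Λ`,
`ξ(x) ∈ ⟦♥⟧(∏_𝔘 A_i)` iff `{i | ξ_i(x_i) ∈ ⟦♥⟧(A_i)} ∈ 𝔘`. -/
def IsQUPCoalg (S : LambdaStructure Λ ar) (𝔘 : Ultrafilter I) (X : I → Type)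
    (ξi : ∀ i, X i → S.T (X i)) (ξ : UProd 𝔘 X → S.T (UProd 𝔘 X)) : Prop :=
  ∀ (A : ∀ i, Set (X i)) (x : ∀ i, X i) (ℓ : Λ),
    ξ (upMk 𝔘 X x) ∈ S.lift ℓ (UProd 𝔘 X) (fun _ => admSet 𝔘 X A) ↔
      {i | ξi i (x i) ∈ S.lift ℓ (X i) (fun _ => A i)} ∈ 𝔘

/-- The predicate interpretation `J` on the ultraproduct is the standard ultraproduct of
the component interpretations `I_i`. -/
def IsQUPPred (𝔘 : Ultrafilter I) (X : I → Type)
    (Ii : ∀ i, (P : Sig) → (Fin (arP P) → X i) → Prop)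
    (J : (P : Sig) → (Fin (arP P) → UProd 𝔘 X) → Prop) : Prop :=
  ∀ (P : Sig) (a : Fin (arP P) → ∀ i, X i),
    J P (fun j => upMk 𝔘 X (a j)) ↔ {i | Ii i P (fun j => a j i)} ∈ 𝔘

end QuasiUltraproducts

/-!
If Łoś's equivalence holds for a formula `φ`, then the truth sets of `φ` in the ultraproduct are
the admissible sets built from the truth sets of `φ` in the components. This turns both
variable-binding cases of the induction into statements about admissible sets: `∀` asks when an
admissible set is the whole ultraproduct, and a modality applied to admissible sets is what the
definition of a quasi-ultraproduct describes. Nothing here depends on the arity of the modalities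
once each of their arguments may be a different admissible set.
-/

theorem eventually_forall_iff_forall_eventually {ι : Type*} {α : ι → Type*}
    [∀ i, Nonempty (α i)] {F : Filter ι} {P : ∀ i, α i → Prop} :
    (∀ᶠ i in F, ∀ b, P i b) ↔ ∀ b : ∀ i, α i, ∀ᶠ i in F, P i (b i) := by
  refine ⟨fun h b => h.mono fun i hi => hi (b i), fun h => ?_⟩
  -- `b i` is a counterexample to `P i` whenever there is one.
  have exists_counterexample : ∀ i, ∃ b, P i b → ∀ d, P i d := fun i =>
    forall_imp_iff_exists_imp.mp id
  choose b hb using exists_counterexample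
  exact (h b).mono hb

section AdmissibleSets

variable {I : Type} {𝔘 : Ultrafilter I} {X : I → Type}

theorem upMk_surjective : Function.Surjective (upMk 𝔘 X) :=
  Quotient.mk_surjective

theorem upMk_eq_upMk_iff {x y : ∀ i, X i} :
    upMk 𝔘 X x = upMk 𝔘 X y ↔ ∀ᶠ i in 𝔘, x i = y i :=
  Quotient.eq (r := upSetoid 𝔘 X)

theorem upMk_mem_admSet_iff {A : ∀ i, Set (X i)} {x : ∀ i, X i} :
    upMk 𝔘 X x ∈ admSet 𝔘 X A ↔ ∀ᶠ i in 𝔘, x i ∈ A i :=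
  Iff.rfl

theorem admSet_eq_univ_iff [∀ i, Nonempty (X i)] {A : ∀ i, Set (X i)} :
    admSet 𝔘 X A = Set.univ ↔ ∀ᶠ i in 𝔘, A i = Set.univ := by
  simp only [Set.eq_univ_iff_forall, upMk_surjective.forall, upMk_mem_admSet_iff,
    eventually_forall_iff_forall_eventually]

end AdmissibleSets

/-- Quasi-ultraproducts of coalgebras for modalities of arbitrary arity: in contrast to
`IsQUPCoalg`, each argument of `♥` ranges over its own admissible set. -/
def IsPolyadicQUPCoalg {I : Type} (S : LambdaStructure Λ ar) (𝔘 : Ultrafilter I) (X : I → Type)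
    (ξi : ∀ i, X i → S.T (X i)) (ξ : UProd 𝔘 X → S.T (UProd 𝔘 X)) : Prop :=
  ∀ (ℓ : Λ) (A : Fin (ar ℓ) → ∀ i, Set (X i)) (x : ∀ i, X i),
    ξ (upMk 𝔘 X x) ∈ S.lift ℓ (UProd 𝔘 X) (fun j => admSet 𝔘 X (A j)) ↔
      ∀ᶠ i in 𝔘, ξi i (x i) ∈ S.lift ℓ (X i) (fun j => A j i)

theorem IsQUPCoalg.isPolyadicQUPCoalg {I : Type} {S : LambdaStructure Λ ar} {𝔘 : Ultrafilter I}
    {X : I → Type} {ξi : ∀ i, X i → S.T (X i)} {ξ : UProd 𝔘 X → S.T (UProd 𝔘 X)}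
    (h : IsQUPCoalg S 𝔘 X ξi ξ) (har : ∀ ℓ, ar ℓ ≤ 1) :
    IsPolyadicQUPCoalg S 𝔘 X ξi ξ := by
  intro ℓ A x
  have : Subsingleton (Fin (ar ℓ)) := Fin.subsingleton_iff_le_one.2 (har ℓ)
  obtain ⟨B, rfl⟩ : ∃ B : ∀ i, Set (X i), A = fun _ => B := by
    rcases isEmpty_or_nonempty (Fin (ar ℓ)) with _ | ⟨⟨j⟩⟩
    · exact ⟨fun _ => ∅, Subsingleton.elim _ _⟩
    · exact ⟨A j, funext fun k => congrArg A (Subsingleton.elim k j)⟩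
  exact h B x ℓ

/-- The truth set `⟦φ⟧^y` of `φ` in the variable `y`, the other variables being read off from
the valuation `v`. -/
def truthSet (S : LambdaStructure Λ ar) {C : Type} (γ : C → S.T C)
    (I : (P : Sig) → (Fin (arP P) → C) → Prop) (v : V → C) (y : V)
    (φ : Formula Λ ar Sig arP V) : Set C :=
  {c | Sat S γ I (Function.update v y c) φ}

section TruthSet

variable {S : LambdaStructure Λ ar} {C : Type} {γ : C → S.T C}
  {I : (P : Sig) → (Fin (arP P) → C) → Prop} {v : V → C}

theorem sat_all_iff_truthSet_eq_univ {y : V} {φ : Formula Λ ar Sig arP V} :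
    Sat S γ I v (.all y φ) ↔ truthSet S γ I v y φ = Set.univ :=
  Set.eq_univ_iff_forall.symm

theorem sat_heart_iff {x : V} {ℓ : Λ} {ys : Fin (ar ℓ) → V}
    {φs : Fin (ar ℓ) → Formula Λ ar Sig arP V} :
    Sat S γ I v (.heart x ℓ ys φs) ↔
      γ (v x) ∈ S.lift ℓ C fun j => truthSet S γ I v (ys j) (φs j) :=
  Iff.rfl

end TruthSet

section Los

variable {I : Type} (S : LambdaStructure Λ ar) (𝔘 : Ultrafilter I) (X : I → Type)
  {ξi : ∀ i, X i → S.T (X i)} {Ii : ∀ i, (P : Sig) → (Fin (arP P) → X i) → Prop}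
  {ξ : UProd 𝔘 X → S.T (UProd 𝔘 X)} {J : (P : Sig) → (Fin (arP P) → UProd 𝔘 X) → Prop}

theorem truthSet_eq_admSet {φ : Formula Λ ar Sig arP V}
    (hφ : ∀ a : V → ∀ i, X i, Sat S ξ J (fun x => upMk 𝔘 X (a x)) φ ↔
      ∀ᶠ i in 𝔘, Sat S (ξi i) (Ii i) (fun x => a x i) φ)
    (a : V → ∀ i, X i) (y : V) :
    truthSet S ξ J (fun x => upMk 𝔘 X (a x)) y φ =
      admSet 𝔘 X fun i => truthSet S (ξi i) (Ii i) (fun x => a x i) y φ := by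
  ext c
  obtain ⟨c, rfl⟩ := upMk_surjective c
  have update_upMk : Function.update (fun x => upMk 𝔘 X (a x)) y (upMk 𝔘 X c) =
      fun x => upMk 𝔘 X (Function.update a y c x) :=
    (Function.comp_update (upMk 𝔘 X) a y c).symm
  have update_apply (i : I) : Function.update (fun x => a x i) y (c i) =
      fun x => Function.update a y c x i :=
    (Function.comp_update (Function.eval i) a y c).symm
  simp only [upMk_mem_admSet_iff, truthSet, Set.mem_ofPred_eq, update_upMk, update_apply, hφ]

theorem coalgebraic_los_general (hcoalg : IsPolyadicQUPCoalg S 𝔘 X ξi ξ)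
    (hpred : IsQUPPred 𝔘 X Ii J) (φ : Formula Λ ar Sig arP V) (a : V → ∀ i, X i) :
    Sat S ξ J (fun x => upMk 𝔘 X (a x)) φ ↔
      ∀ᶠ i in 𝔘, Sat S (ξi i) (Ii i) (fun x => a x i) φ := by
  induction φ generalizing a with
  | eq x y => exact upMk_eq_upMk_iff
  | pred P xs => exact hpred P fun j => a (xs j)
  | bot => simp only [Sat, Filter.eventually_false_iff_eq_bot, 𝔘.neBot.ne]
  | imp φ ψ ihφ ihψ => simp only [Sat, ihφ, ihψ, Ultrafilter.eventually_imp]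
  | all y φ ih =>
    have : ∀ i, Nonempty (X i) := fun i => ⟨a y i⟩
    simp only [sat_all_iff_truthSet_eq_univ, truthSet_eq_admSet S 𝔘 X ih, admSet_eq_univ_iff]
  | heart x ℓ ys φs ih =>
    simp only [sat_heart_iff, fun j => truthSet_eq_admSet S 𝔘 X (ih j)]
    exact hcoalg ℓ (fun j i => truthSet S (ξi i) (Ii i) (fun x => a x i) (ys j) (φs j)) (a x)

end Los

/-- **Coalgebraic Łoś Theorem** (Thm. 5.3): if the coalgebraic model `(∏_𝔘 X_i, ξ, J)` is a
quasi-ultraproduct of the coalgebraic models `(X_i, ξ_i, I_i)` for the ultrafilter `𝔘`, then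
for every CPL formula `φ` and every tuple of states of the ultraproduct (given by a valuation
`a` into families), `φ` holds of the tuple in the ultraproduct iff it holds of its components
`𝔘`-almost everywhere. -/
theorem coalgebraic_los [DecidableEq V] (S : LambdaStructure Λ ar)
    (hunary : ∀ ℓ : Λ, ar ℓ = 1)
    {I : Type} (𝔘 : Ultrafilter I) (X : I → Type) (hne : ∀ i, Nonempty (X i))
    (ξi : ∀ i, X i → S.T (X i))
    (Ii : ∀ i, (P : Sig) → (Fin (arP P) → X i) → Prop)
    (ξ : UProd 𝔘 X → S.T (UProd 𝔘 X))
    (J : (P : Sig) → (Fin (arP P) → UProd 𝔘 X) → Prop)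
    (hcoalg : IsQUPCoalg S 𝔘 X ξi ξ)
    (hpred : IsQUPPred 𝔘 X Ii J) :
    ∀ (φ : Formula Λ ar Sig arP V) (a : V → ∀ i, X i),
      Sat S ξ J (fun x => upMk 𝔘 X (a x)) φ ↔
        {i | Sat S (ξi i) (Ii i) (fun x => a x i) φ} ∈ 𝔘 :=
  coalgebraic_los_general S 𝔘 X
    (hcoalg.isPolyadicQUPCoalg fun ℓ => (hunary ℓ).le) hpred

end CPL
end

section
/- Downward Löwenheim–Skolem Theorem (ω-bounded case): Over any Λ-structure (with all operators unary) that is finitary one-step compact and in which every operator is ω-bounded, CPL(Λ,Σ) satisfies the downward Löwenheim–Skolem theorem: every coalgebraic model of infinite cardinality κ has, for every infinite cardinal λ ≤ κ (with λ at least the cardinality of the language), an elementary substructure of cardinality λ. -/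
namespace CPL

variable {Λ : Type} {ar : Λ → ℕ} {Sig : Type} {arP : Sig → ℕ} {V : Type}

variable [DecidableEq V]

variable {Λ : Type} {ar : Λ → ℕ} {sVar : Type}

section OneStepCompactness

/-- Satisfaction of a one-step formula (a Boolean combination of expressions `♥A`, `A ⊆ X`)
by an element `t ∈ TX` (unary operators). -/
def osSat (S : LambdaStructure Λ ar) (X : Type) (t : S.T X) (A : PropForm (Λ × Set X)) :
    Prop :=
  t ∈ pEval (fun l => S.lift l.1 X fun _ => l.2) A

/-- A `Λ`-structure is one-step compact: every finitely satisfiable set of one-step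
formulas over any set `X` is satisfiable. -/
def OneStepCompact (S : LambdaStructure Λ ar) : Prop :=
  ∀ (X : Type) (Φ : Set (PropForm (Λ × Set X))),
    (∀ Φ₀ ⊆ Φ, Φ₀.Finite → ∃ t : S.T X, ∀ A ∈ Φ₀, osSat S X t A) →
    ∃ t : S.T X, ∀ A ∈ Φ, osSat S X t A

/-- Satisfaction of a finitary one-step formula (atoms `♥B` with `B ⊆ X` finite). -/
def osSatFin (S : LambdaStructure Λ ar) (X : Type) (t : S.T X)
    (A : PropForm (Λ × Finset X)) : Prop :=
  t ∈ pEval (fun l => S.lift l.1 X fun _ => (l.2 : Set X)) A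

/-- A `Λ`-structure is finitary one-step compact: every finitely satisfiable set of
one-step formulas over finite subsets of any set `X` is satisfiable. -/
def FinitaryOneStepCompact (S : LambdaStructure Λ ar) : Prop :=
  ∀ (X : Type) (Φ : Set (PropForm (Λ × Finset X))),
    (∀ Φ₀ ⊆ Φ, Φ₀.Finite → ∃ t : S.T X, ∀ A ∈ Φ₀, osSatFin S X t A) →
    ∃ t : S.T X, ∀ A ∈ Φ, osSatFin S X t A

end OneStepCompactness

/-- The unary modal operator `ℓ` is `ω`-bounded. -/
def OmegaBounded1 (S : LambdaStructure Λ ar) (ℓ : Λ) : Prop :=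
  ∀ (X : Type) (A : Set X) (t : S.T X),
    t ∈ S.lift ℓ X (fun _ => A) ↔
      ∃ B : Set X, B ⊆ A ∧ B.Finite ∧ t ∈ S.lift ℓ X (fun _ => B)

/-! A Löwenheim–Skolem hull `Y` is closed under choosing, for every formula and every valuation
in `Y`, finitely many witnesses: a counterexample to a universal quantifier, or, for a modality
that holds, a finite subset of its extension on which it already holds (`ω`-boundedness). What
remains is a coalgebra structure on `Y` for which `ζ y ∈ ♥B ↔ γ y ∈ ♥B` for finite `B ⊆ Y`. Any
finite part of this specification is met by mapping `γ y` along a function `C → Y` that fixes a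
finite subset of `Y` and sends everything else to one fresh point of `Y`; compactness then provides
a single `ζ y` meeting all of it. -/

section FinitaryClosure

open Cardinal

universe u

variable {ι C : Type u} {β : ι → Type u} [∀ i, Finite (β i)]

theorem exists_closed_superset_mk_le (f : ∀ i, (β i → C) → C) (s : Set C) :
    ∃ Y : Set C, s ⊆ Y ∧ #Y ≤ max (#s + #ι) ℵ₀ ∧
      ∀ i (u : β i → C), (∀ b, u b ∈ Y) → f i u ∈ Y := by
  -- `Y` is the set of values of the terms over the constants `s` and the operations `f`.
  let arity : s ⊕ ι → Type u := Sum.elim (fun _ => PEmpty) β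
  have : ∀ a, Finite (arity a) := by rintro (_ | i) <;> dsimp [arity] <;> infer_instance
  let eval : WType arity → C := WType.elim C fun
    | ⟨.inl c, _⟩ => c
    | ⟨.inr i, u⟩ => f i u
  refine ⟨Set.range eval, fun c hc => ⟨.mk (.inl ⟨c, hc⟩) PEmpty.elim, rfl⟩, ?_, ?_⟩
  · calc #(Set.range eval) ≤ #(WType arity) := mk_range_le
      _ ≤ max #(s ⊕ ι) ℵ₀ := WType.cardinalMk_le_max_aleph0_of_finite
      _ = max (#s + #ι) ℵ₀ := by rw [mk_sum, lift_id, lift_id]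
  · intro i u hu
    choose w hw using hu
    exact ⟨.mk (.inr i) w, congrArg (f i) (funext hw)⟩

theorem exists_closed_superset_mk_eq {F : ∀ i, (β i → C) → Set C}
    (hF : ∀ i u, (F i u).Countable) {s : Set C} {κ : Cardinal.{u}} (hκ : ℵ₀ ≤ κ)
    (hκC : κ ≤ #C) (hs : #s ≤ κ) (hι : #ι ≤ κ) :
    ∃ Y : Set C, s ⊆ Y ∧ #Y = κ ∧ ∀ i (u : β i → C), (∀ b, u b ∈ Y) → F i u ⊆ Y := by
  have : Nonempty C := mk_ne_zero_iff.1 (aleph0_pos.trans_le (hκ.trans hκC)).ne'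
  choose e he using fun i u => Set.countable_iff_exists_subset_range.1 (hF i u)
  obtain ⟨t, ht⟩ := le_mk_iff_exists_set.1 hκC
  obtain ⟨Y, hstY, hYle, hY⟩ := exists_closed_superset_mk_le
    (ι := ι × ℕ) (β := fun p => β p.1) (fun p u => e p.1 u p.2) (s ∪ t)
  refine ⟨Y, Set.subset_union_left.trans hstY, le_antisymm (hYle.trans ?_) ?_, ?_⟩
  · have hst : #↑(s ∪ t) ≤ κ := (mk_union_le s t).trans (add_le_of_le hκ hs ht.le)
    have hιℕ : #(ι × ℕ) ≤ κ := by
      simpa only [mk_prod, lift_uzero, mk_nat, lift_aleph0] using mul_le_of_le hκ hι hκ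
    exact max_le (add_le_of_le hκ hst hιℕ) hκ
  · exact ht ▸ mk_le_mk_of_subset (Set.subset_union_right.trans hstY)
  · rintro i u hu c hc
    obtain ⟨n, rfl⟩ := he i u hc
    exact hY (i, n) u hu

end FinitaryClosure

theorem exists_eq_const_of_subsingleton {ι α : Type*} [Subsingleton ι] [Nonempty α] (f : ι → α) :
    ∃ a, f = fun _ => a := by
  rcases isEmpty_or_nonempty ι with _ | ⟨⟨i⟩⟩
  · exact ⟨Classical.arbitrary α, Subsingleton.elim _ _⟩
  · exact ⟨f i, funext fun j => congrArg f (Subsingleton.elim j i)⟩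

namespace OmegaBounded1

variable {S : LambdaStructure Λ ar} {ℓ : Λ} {X : Type} {t : S.T X}

theorem mem_lift_iff_exists_finset (h : OmegaBounded1 S ℓ) {A : Set X} :
    (t ∈ S.lift ℓ X fun _ => A) ↔ ∃ B : Finset X, ↑B ⊆ A ∧ t ∈ S.lift ℓ X fun _ => ↑B := by
  rw [h X A t]
  constructor
  · rintro ⟨B, hBA, hB, ht⟩
    exact ⟨hB.toFinset, by simpa using hBA, by simpa using ht⟩
  · rintro ⟨B, hBA, ht⟩
    exact ⟨B, hBA, B.finite_toSet, ht⟩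

theorem lift_mono (h : OmegaBounded1 S ℓ) {A B : Set X} (hAB : A ⊆ B)
    (ht : t ∈ S.lift ℓ X fun _ => A) : t ∈ S.lift ℓ X fun _ => B := by
  obtain ⟨F, hFA, hF⟩ := h.mem_lift_iff_exists_finset.1 ht
  exact h.mem_lift_iff_exists_finset.2 ⟨F, hFA.trans hAB, hF⟩

end OmegaBounded1

section Transfer

variable {S : LambdaStructure Λ ar} {X C : Type}

theorem FinitaryOneStepCompact.exists_forall_mem_lift_iff (hcompact : FinitaryOneStepCompact S)
    {P : Λ × Finset X → Prop}
    (hP : ∀ Q : Finset (Λ × Finset X), ∃ t : S.T X, ∀ p ∈ Q,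
      (t ∈ S.lift p.1 X fun _ => ↑p.2) ↔ P p) :
    ∃ t : S.T X, ∀ p : Λ × Finset X, (t ∈ S.lift p.1 X fun _ => ↑p.2) ↔ P p := by
  classical
  let literal : Λ × Finset X → PropForm (Λ × Finset X) := fun p =>
    if P p then .var p else (PropForm.var p).neg
  have osSatFin_literal : ∀ (t : S.T X) p,
      osSatFin S X t (literal p) ↔ ((t ∈ S.lift p.1 X fun _ => ↑p.2) ↔ P p) := by
    intro t p
    by_cases hp : P p <;> simp [literal, hp, osSatFin, pEval, PropForm.neg]
  obtain ⟨t, ht⟩ := hcompact X (Set.range literal) fun Φ₀ hΦ₀ hfin => by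
    obtain ⟨Q, hQ⟩ : ∃ Q : Finset (Λ × Finset X), Q.image literal = hfin.toFinset := by
      simpa using Finset.subset_set_image_iff (s := Set.univ) (t := hfin.toFinset) (f := literal)
        |>.1 (by simpa using hΦ₀)
    obtain ⟨t, ht⟩ := hP Q
    refine ⟨t, fun A hA => ?_⟩
    obtain ⟨p, hpQ, rfl⟩ := Finset.mem_image.1 (hQ ▸ hfin.mem_toFinset.2 hA)
    exact (osSatFin_literal t p).2 (ht p hpQ)
  exact ⟨t, fun p => (osSatFin_literal t p).1 (ht _ ⟨p, rfl⟩)⟩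

theorem exists_preimage_eq_image_of_subset_finset [Infinite X] {j : X → C}
    (hj : Function.Injective j) (F : Finset X) :
    ∃ f : C → X, ∀ B ⊆ (F : Set X), f ⁻¹' B = j '' B := by
  obtain ⟨x₀, hx₀⟩ := Infinite.exists_notMem_finset F
  have hjF : Function.Injective fun x : F => j x := hj.comp Subtype.val_injective
  refine ⟨Function.extend (fun x : F => j x) (↑) fun _ => x₀, fun B hB => ?_⟩
  ext c
  by_cases hc : ∃ x : F, j x = c
  · obtain ⟨x, rfl⟩ := hc
    rw [Set.mem_preimage, hjF.extend_apply, hj.mem_set_image]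
  · rw [Set.mem_preimage, Function.extend_apply' _ _ _ hc]
    refine iff_of_false (fun h => hx₀ (hB h)) ?_
    rintro ⟨x, hxB, rfl⟩
    exact hc ⟨⟨x, hB hxB⟩, rfl⟩

theorem FinitaryOneStepCompact.exists_mem_lift_iff_mem_lift_image
    (hcompact : FinitaryOneStepCompact S) (har : ∀ ℓ, ar ℓ ≤ 1)
    (homega : ∀ ℓ, OmegaBounded1 S ℓ) [Infinite X] {j : X → C} (hj : Function.Injective j)
    (t : S.T C) :
    ∃ u : S.T X, ∀ (ℓ : Λ) (A : Fin (ar ℓ) → Set X),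
      u ∈ S.lift ℓ X A ↔ t ∈ S.lift ℓ C fun i => j '' A i := by
  classical
  obtain ⟨u, hu⟩ := hcompact.exists_forall_mem_lift_iff
    (P := fun p : Λ × Finset X => t ∈ S.lift p.1 C fun _ => j '' ↑p.2) fun Q => by
      obtain ⟨f, hf⟩ := exists_preimage_eq_image_of_subset_finset hj (Q.biUnion Prod.snd)
      refine ⟨S.map f t, fun p hp => ?_⟩
      rw [S.natural, hf _ (Finset.coe_subset.2 (Finset.subset_biUnion_of_mem Prod.snd hp))]
  refine ⟨u, fun ℓ A => ?_⟩
  have := Fin.subsingleton_iff_le_one.2 (har ℓ)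
  obtain ⟨A, rfl⟩ := exists_eq_const_of_subsingleton A
  calc (u ∈ S.lift ℓ X fun _ => A)
      ↔ ∃ B : Finset X, ↑B ⊆ A ∧ u ∈ S.lift ℓ X fun _ => ↑B :=
        (homega ℓ).mem_lift_iff_exists_finset
    _ ↔ ∃ B : Finset X, ↑B ⊆ A ∧ t ∈ S.lift ℓ C fun _ => j '' ↑B := by
        simp only [fun B => hu (ℓ, B)]
    _ ↔ ∃ B : Finset C, ↑B ⊆ j '' A ∧ t ∈ S.lift ℓ C fun _ => ↑B := by
        simp only [Finset.subset_set_image_iff, ← Finset.coe_image]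
        grind
    _ ↔ t ∈ S.lift ℓ C fun _ => j '' A := (homega ℓ).mem_lift_iff_exists_finset.symm

end Transfer

theorem Formula.finite_freeVars {U : Type} (φ : Formula Λ ar Sig arP U) : φ.freeVars.Finite := by
  induction φ with
  | eq a b => exact Set.toFinite {a, b}
  | pred P xs => exact Set.finite_range xs
  | bot => exact Set.finite_empty
  | imp φ ψ ihφ ihψ => exact ihφ.union ihψ
  | all x φ ih => exact ih.sdiff
  | heart x ℓ ys φs ih => exact (Set.finite_iUnion fun i => (ih i).sdiff).insert x

theorem dependsOn_comp_update {C α : Type*} {f : (V → C) → α} {s : Set V} (hf : DependsOn f s)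
    (x : V) (c : C) : DependsOn (fun v => f (Function.update v x c)) (s \ {x}) := by
  intro v w hvw
  refine hf fun z hz => ?_
  by_cases hzx : z = x
  · simp [hzx]
  · simpa [hzx] using hvw z ⟨hz, hzx⟩

section Elementarity

variable (S : LambdaStructure Λ ar) {C : Type} (γ : C → S.T C)
  (I : (P : Sig) → (Fin (arP P) → C) → Prop)

/-- The extension `⟦φ⟧^x = {c | 𝔐, v[c/x] ⊨ φ}` of `φ` in the variable `x`. -/
def extension (v : V → C) (x : V) (φ : Formula Λ ar Sig arP V) : Set C :=
  {c | Sat S γ I (Function.update v x c) φ}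

theorem dependsOn_sat (φ : Formula Λ ar Sig arP V) :
    DependsOn (fun v : V → C => Sat S γ I v φ) φ.freeVars := by
  induction φ with
  | eq a b =>
    intro v w h
    simp only [Sat, h a (.inl rfl), h b (.inr rfl)]
  | pred P xs =>
    intro v w h
    simp only [Sat, fun i => h (xs i) ⟨i, rfl⟩]
  | bot => exact fun _ _ _ => rfl
  | imp φ ψ ihφ ihψ =>
    intro v w h
    simp only [Sat, ihφ fun z hz => h z (.inl hz), ihψ fun z hz => h z (.inr hz)]
  | all x φ ih =>
    intro v w h
    simp only [Sat, fun c => dependsOn_comp_update ih x c h]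
  | heart x ℓ ys φs ih =>
    intro v w h
    have hφs : ∀ i c, Sat S γ I (Function.update v (ys i) c) (φs i) =
        Sat S γ I (Function.update w (ys i) c) (φs i) := fun i c =>
      dependsOn_comp_update (ih i) (ys i) c fun z hz => h z (.inr (Set.mem_iUnion.2 ⟨i, hz⟩))
    simp only [Sat, h x (.inl rfl), hφs]

theorem dependsOn_extension (x : V) (φ : Formula Λ ar Sig arP V) :
    DependsOn (fun v : V → C => extension S γ I v x φ) (φ.freeVars \ {x}) :=
  fun _ _ h => Set.ext fun c =>
    iff_of_eq (dependsOn_comp_update (dependsOn_sat S γ I φ) x c h)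

/-- The Tarski–Vaught condition on `Y ⊆ C` for the outermost operator of a formula at a valuation:
restricting the range of its bound variables to `Y`, while still evaluating the immediate
subformulas in the whole model, does not change its truth value. -/
def TarskiVaughtAt (Y : Set C) (v : V → C) : Formula Λ ar Sig arP V → Prop
  | .all x φ => Y ⊆ extension S γ I v x φ → extension S γ I v x φ = Set.univ
  | .heart x ℓ ys φs =>
      (γ (v x) ∈ S.lift ℓ C fun i => Y ∩ extension S γ I v (ys i) (φs i)) ↔
        γ (v x) ∈ S.lift ℓ C fun i => extension S γ I v (ys i) (φs i)
  | _ => True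

theorem dependsOn_tarskiVaughtAt (Y : Set C) (φ : Formula Λ ar Sig arP V) :
    DependsOn (fun v => TarskiVaughtAt S γ I Y v φ) φ.freeVars := by
  intro v w h
  cases φ with
  | all x φ => simp only [TarskiVaughtAt, dependsOn_extension S γ I x φ h]
  | heart x ℓ ys φs =>
    have hφs : ∀ i, extension S γ I v (ys i) (φs i) = extension S γ I w (ys i) (φs i) := fun i =>
      dependsOn_extension S γ I (ys i) (φs i) fun z hz => h z (.inr (Set.mem_iUnion.2 ⟨i, hz⟩))
    simp only [TarskiVaughtAt, h x (.inl rfl), hφs]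
  | _ => rfl

variable {S}

theorem exists_finite_forall_superset_tarskiVaughtAt (har : ∀ ℓ, ar ℓ ≤ 1)
    (homega : ∀ ℓ, OmegaBounded1 S ℓ) (v : V → C) (φ : Formula Λ ar Sig arP V) :
    ∃ B : Set C, B.Finite ∧ ∀ Y, B ⊆ Y → TarskiVaughtAt S γ I Y v φ := by
  cases φ with
  | all x φ =>
    by_cases huniv : extension S γ I v x φ = Set.univ
    · exact ⟨∅, Set.finite_empty, fun _ _ _ => huniv⟩
    · obtain ⟨c, hc⟩ := (Set.ne_univ_iff_exists_notMem _).1 huniv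
      exact ⟨{c}, Set.finite_singleton c, fun Y hcY hY => absurd (hY (hcY rfl)) hc⟩
  | heart x ℓ ys φs =>
    have := Fin.subsingleton_iff_le_one.2 (har ℓ)
    obtain ⟨A, hA⟩ := exists_eq_const_of_subsingleton fun i => extension S γ I v (ys i) (φs i)
    simp only [TarskiVaughtAt, congrFun hA]
    by_cases hγ : γ (v x) ∈ S.lift ℓ C fun _ => A
    · obtain ⟨B, hBA, hB⟩ := (homega ℓ).mem_lift_iff_exists_finset.1 hγ
      exact ⟨B, B.finite_toSet, fun Y hBY =>
        iff_of_true ((homega ℓ).lift_mono (Set.subset_inter hBY hBA) hB) hγ⟩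
    · exact ⟨∅, Set.finite_empty, fun Y _ =>
        iff_of_false (mt ((homega ℓ).lift_mono Set.inter_subset_right) hγ) hγ⟩
  | _ => exact ⟨∅, Set.finite_empty, fun _ _ => trivial⟩

theorem exists_superset_mk_eq_forall_tarskiVaughtAt (har : ∀ ℓ, ar ℓ ≤ 1)
    (homega : ∀ ℓ, OmegaBounded1 S ℓ) {s : Set C} {κ : Cardinal} (hκ : Cardinal.aleph0 ≤ κ)
    (hκC : κ ≤ Cardinal.mk C) (hs : Cardinal.mk s ≤ κ)
    (hlang : Cardinal.mk (Formula Λ ar Sig arP V) ≤ κ) :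
    ∃ Y : Set C, s ⊆ Y ∧ Cardinal.mk Y = κ ∧
      ∀ (φ : Formula Λ ar Sig arP V) (v : V → Y),
        TarskiVaughtAt S γ I Y (fun x => (v x : C)) φ := by
  -- Only the values on the free variables matter, so finitary operations supply the witnesses.
  have exists_witnesses : ∀ (φ : Formula Λ ar Sig arP V) (u : φ.freeVars → C),
      ∃ B : Set C, B.Finite ∧ ∀ (Y : Set C) (v : V → C), B ⊆ Y → (∀ z : φ.freeVars, v z = u z) →
        TarskiVaughtAt S γ I Y v φ := by
    intro φ u
    by_cases hu : ∃ w : V → C, ∀ z : φ.freeVars, w z = u z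
    · obtain ⟨w, hw⟩ := hu
      obtain ⟨B, hB, hBY⟩ := exists_finite_forall_superset_tarskiVaughtAt γ I har homega w φ
      refine ⟨B, hB, fun Y v hY hv => ?_⟩
      have hvw : ∀ z ∈ φ.freeVars, v z = w z := fun z hz => (hv ⟨z, hz⟩).trans (hw ⟨z, hz⟩).symm
      exact (iff_of_eq (dependsOn_tarskiVaughtAt S γ I Y φ hvw)).2 (hBY Y hY)
    · exact ⟨∅, Set.finite_empty, fun Y v _ hv => absurd ⟨v, hv⟩ hu⟩
  choose F hFfin hF using exists_witnesses
  have := fun φ : Formula Λ ar Sig arP V => φ.finite_freeVars.to_subtype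
  obtain ⟨Y, hsY, hYκ, hFY⟩ :=
    exists_closed_superset_mk_eq (fun φ u => (hFfin φ u).countable) hκ hκC hs hlang
  exact ⟨Y, hsY, hYκ, fun φ v =>
    hF φ _ Y _ (hFY φ (fun z => v z) fun z => (v z).2) fun _ => rfl⟩

variable {γ I}

theorem sat_restrict_iff {Y : Set C} {ζ : Y → S.T Y}
    (hζ : ∀ (y : Y) (ℓ : Λ) (A : Fin (ar ℓ) → Set Y),
      ζ y ∈ S.lift ℓ Y A ↔ γ y ∈ S.lift ℓ C fun i => Subtype.val '' A i)
    (hY : ∀ (φ : Formula Λ ar Sig arP V) (v : V → Y),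
      TarskiVaughtAt S γ I Y (fun x => (v x : C)) φ)
    (φ : Formula Λ ar Sig arP V) (v : V → Y) :
    Sat S ζ (fun P cs => I P fun j => (cs j : C)) v φ ↔ Sat S γ I (fun x => (v x : C)) φ := by
  have sat_update {ψ : Formula Λ ar Sig arP V}
      (ih : ∀ w : V → Y, Sat S ζ (fun P cs => I P fun j => (cs j : C)) w ψ ↔
        Sat S γ I (fun x => (w x : C)) ψ) (v : V → Y) (x : V) (c : Y) :
      Sat S ζ (fun P cs => I P fun j => (cs j : C)) (Function.update v x c) ψ ↔
        ↑c ∈ extension S γ I (fun z => (v z : C)) x ψ :=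
    (ih _).trans (iff_of_eq (congrArg (Sat S γ I · ψ) (Function.comp_update Subtype.val v x c)))
  induction φ generalizing v with
  | eq a b => exact Subtype.ext_iff
  | pred P xs => exact Iff.rfl
  | bot => exact Iff.rfl
  | imp φ ψ ihφ ihψ => exact imp_congr (ihφ v) (ihψ v)
  | all x φ ih =>
    calc (∀ c : Y, Sat S ζ (fun P cs => I P fun j => (cs j : C)) (Function.update v x c) φ)
        ↔ Y ⊆ extension S γ I (fun z => (v z : C)) x φ := by
          simp only [sat_update ih, Subtype.forall, Set.subset_def]
      _ ↔ extension S γ I (fun z => (v z : C)) x φ = Set.univ :=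
          ⟨hY (.all x φ) v, fun h => h ▸ Set.subset_univ Y⟩
      _ ↔ Sat S γ I (fun z => (v z : C)) (.all x φ) := Set.eq_univ_iff_forall
  | heart x ℓ ys φs ih =>
    calc (ζ (v x) ∈ S.lift ℓ Y fun i =>
            {c | Sat S ζ (fun P cs => I P fun j => (cs j : C)) (Function.update v (ys i) c) (φs i)})
        ↔ ζ (v x) ∈ S.lift ℓ Y fun i =>
            Subtype.val ⁻¹' extension S γ I (fun z => (v z : C)) (ys i) (φs i) := by
          simp only [fun i => sat_update (ih i)]
          rfl
      _ ↔ γ (v x) ∈ S.lift ℓ C fun i =>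
            Y ∩ extension S γ I (fun z => (v z : C)) (ys i) (φs i) := by
          simp only [hζ, Subtype.image_preimage_coe]
      _ ↔ Sat S γ I (fun z => (v z : C)) (.heart x ℓ ys φs) := hY (.heart x ℓ ys φs) v

end Elementarity

theorem downward_lowenheim_skolem_omega_bounded_general {S : LambdaStructure Λ ar}
    (har : ∀ ℓ, ar ℓ ≤ 1) (hcompact : FinitaryOneStepCompact S)
    (homega : ∀ ℓ, OmegaBounded1 S ℓ) {C : Type} (γ : C → S.T C)
    (I : (P : Sig) → (Fin (arP P) → C) → Prop) (s : Set C) {κ : Cardinal}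
    (hκ : Cardinal.aleph0 ≤ κ) (hκC : κ ≤ Cardinal.mk C) (hs : Cardinal.mk s ≤ κ)
    (hlang : Cardinal.mk (Formula Λ ar Sig arP V) ≤ κ) :
    ∃ (Y : Set C) (ζ : Y → S.T Y), s ⊆ Y ∧ Cardinal.mk Y = κ ∧
      ∀ (φ : Formula Λ ar Sig arP V) (v : V → Y),
        Sat S ζ (fun P cs => I P fun j => (cs j : C)) v φ ↔
          Sat S γ I (fun x => (v x : C)) φ := by
  obtain ⟨Y, hsY, hYκ, hY⟩ :=
    exists_superset_mk_eq_forall_tarskiVaughtAt γ I har homega hκ hκC hs hlang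
  have : Infinite Y := Cardinal.infinite_iff.2 (hYκ ▸ hκ)
  choose ζ hζ using fun y : Y =>
    hcompact.exists_mem_lift_iff_mem_lift_image har homega
      (Subtype.val_injective (p := (· ∈ Y))) (γ y)
  exact ⟨Y, ζ, hsY, hYκ, sat_restrict_iff hζ hY⟩

/-- **Downward Löwenheim–Skolem Theorem, `ω`-bounded case** (Thm. 5.9): over any
`Λ`-structure (with all operators unary) that is finitary one-step compact and all of whose
operators are `ω`-bounded, every coalgebraic model of infinite cardinality `κ` has, for every
infinite cardinal `λ ≤ κ` that is at least the cardinality of the language, an elementary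
substructure of cardinality `λ` (the coalgebra structure on the substructure need not be a
subcoalgebra). -/
theorem downward_lowenheim_skolem_omega_bounded [DecidableEq V]
    (S : LambdaStructure Λ ar)
    (hunary : ∀ ℓ : Λ, ar ℓ = 1)
    (hcompact : FinitaryOneStepCompact S)
    (homega : ∀ ℓ : Λ, OmegaBounded1 S ℓ)
    (C : Type) (γ : C → S.T C) (I : (P : Sig) → (Fin (arP P) → C) → Prop)
    (hinf : Cardinal.aleph0 ≤ Cardinal.mk C)
    (lam : Cardinal) (hlam0 : Cardinal.aleph0 ≤ lam) (hlamC : lam ≤ Cardinal.mk C)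
    (hlang : Cardinal.mk (Formula Λ ar Sig arP V) ≤ lam) :
    ∃ (Y : Set C) (ζ : Y → S.T Y),
      Cardinal.mk Y = lam ∧
      ∀ (φ : Formula Λ ar Sig arP V) (v : V → Y),
        Sat S ζ (fun P cs => I P fun j => ((cs j : Y) : C)) v φ ↔
          Sat S γ I (fun x => ((v x : Y) : C)) φ := by
  obtain ⟨Y, ζ, -, hY⟩ := downward_lowenheim_skolem_omega_bounded_general
    (fun ℓ => (hunary ℓ).le) hcompact homega γ I ∅ hlam0 hlamC (by simp) hlang
  exact ⟨Y, ζ, hY⟩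

end CPL
end

section
/- Let Y be an infinite subset of a set X, let τ : sVar → 𝒫_fin(Y) be a valuation of schematic variables by finite subsets of Y, and let A ∈ Prop(sVar) be a propositional formula over sVar. Then Y ⊨ Aτ if and only if X ⊨ Aτ, i.e. the extension of A under τ in the Boolean algebra 𝒫(Y) equals Y precisely when its extension under τ in the Boolean algebra 𝒫(X) equals X. -/
namespace CPL

/-! Whether a point lies in the value of a formula depends only on which of the finitely many
sets assigned to its atoms contain the point. All points of `X` outside `Y` lie in none of them, and
since `Y` is infinite and these sets are finite, some point of `Y` lies in none of them either; so
`Y` already realizes every membership pattern that occurs in `X`. -/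

/-- The set of atoms occurring in a formula. -/
def PropForm.atoms {α : Type} : PropForm α → Set α
  | .var a => {a}
  | .bot => ∅
  | .imp A B => A.atoms ∪ B.atoms

theorem PropForm.finite_atoms {α : Type} (A : PropForm α) : A.atoms.Finite := by
  induction A with
  | var a => exact Set.finite_singleton a
  | bot => exact Set.finite_empty
  | imp A B ihA ihB => exact ihA.union ihB

section Transfer

variable {α C D : Type} {f : α → Set C} {g : α → Set D} {A : PropForm α}

theorem mem_pEval_congr {x : C} {y : D} (h : ∀ p ∈ A.atoms, x ∈ f p ↔ y ∈ g p) :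
    x ∈ pEval f A ↔ y ∈ pEval g A := by
  induction A with
  | var a => exact h a rfl
  | bot => exact Iff.rfl
  | imp A B ihA ihB =>
    have hA : x ∈ pEval f A ↔ y ∈ pEval g A := ihA fun p hp => h p (.inl hp)
    have hB : x ∈ pEval f B ↔ y ∈ pEval g B := ihB fun p hp => h p (.inr hp)
    exact or_congr (not_congr hA) hB

theorem pEval_eq_univ_of_forall_exists
    (h : ∀ x : C, ∃ y : D, ∀ p ∈ A.atoms, x ∈ f p ↔ y ∈ g p) (hg : pEval g A = Set.univ) :
    pEval f A = Set.univ := by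
  refine Set.eq_univ_of_forall fun x => ?_
  obtain ⟨y, hxy⟩ := h x
  exact (mem_pEval_congr hxy).2 (hg ▸ Set.mem_univ y)

end Transfer

theorem prop_eval_finite_transfer_general {X sVar : Type} {Y : Set X} {τ : sVar → Set X}
    {A : PropForm sVar} (hY : ¬ Y ⊆ ⋃ p ∈ A.atoms, τ p) (hsub : ∀ p ∈ A.atoms, τ p ⊆ Y) :
    pEval (fun p => {y : Y | (y : X) ∈ τ p}) A = Set.univ ↔ pEval τ A = Set.univ := by
  refine ⟨pEval_eq_univ_of_forall_exists fun x => ?_,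
    pEval_eq_univ_of_forall_exists fun y => ⟨y, fun _ _ => Iff.rfl⟩⟩
  by_cases hx : x ∈ Y
  · exact ⟨⟨x, hx⟩, fun _ _ => Iff.rfl⟩
  · obtain ⟨y, hyY, hy⟩ := Set.not_subset.1 hY
    have hy_notMem : ∀ p ∈ A.atoms, y ∉ τ p := fun p hp hyp => hy (Set.mem_biUnion hp hyp)
    have hx_notMem : ∀ p ∈ A.atoms, x ∉ τ p := fun p hp hxp => hx (hsub p hp hxp)
    exact ⟨⟨y, hyY⟩, fun p hp => iff_of_false (hx_notMem p hp) (hy_notMem p hp)⟩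

/-- **Lemma 5.10**: let `Y` be an infinite subset of `X`, let `τ : sVar → 𝒫_fin(Y)` be a
valuation of the schematic variables by finite subsets of `Y`, and let `A` be a propositional
formula over `sVar`.  Then `Y ⊨ Aτ` iff `X ⊨ Aτ`: the extension of `A` under `τ` in the
Boolean algebra `𝒫(Y)` is all of `Y` precisely when its extension under `τ` in the Boolean
algebra `𝒫(X)` is all of `X`. -/
theorem prop_eval_finite_transfer {X : Type} {sVar : Type}
    (Y : Set X) (hY : Y.Infinite)
    (τ : sVar → Set X) (hfin : ∀ p, (τ p).Finite) (hsub : ∀ p, τ p ⊆ Y)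
    (A : PropForm sVar) :
    pEval (fun p => {y : Y | (y : X) ∈ τ p}) A = Set.univ ↔ pEval τ A = Set.univ := by
  have hfinite : (⋃ p ∈ A.atoms, τ p).Finite := A.finite_atoms.biUnion fun p _ => hfin p
  exact prop_eval_finite_transfer_general (fun h => hY (hfinite.subset h)) fun p _ => hsub p

end CPL
end
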